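/- Let A : [0,∞) → [0,∞) be continuous, nondecreasing and convex with A(0) = 0, let ρ₁, ρ₂ ∈ (0,1) satisfy A((1−ρ₂)s) ≤ (1−ρ₁)A(s) for all s > 0, and let b > 0, T > 0, n ∈ ℕ, t ∈ [nT, (n+1)T) with A(nT) > 0, A(t) > A(nT) and A(t−ρ₂nT) > 0. Let μ_Y = Γ(A(nT), b/(1−ρ₁)) ∗ Γ(A(t)−A(nT), b) (the law of the ARD1 deterioration Y_t^{(1)}) and μ_Z = Γ(A(t−ρ₂nT), b) (the law of the ARA1 deterioration Z_t^{(2)}). Then μ_Z ≺_icv μ_Y: for all x ≥ 0, ∫_0^x μ_Z((−∞,u]) du ≥ ∫_0^x μ_Y((−∞,u]) du. -/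

import Mathlib

/-!
The convexity and shape hypotheses on `A` give `A(t - ρ₂nT) ≤ (1 - ρ₁) A(nT) + (A(t) - A(nT))`:
the increment of `A` over `[t - ρ₂nT, t]` dominates the one over `[(1 - ρ₂)nT, nT]`, which is at
least `ρ₁ A(nT)`. Since `Γ(p, b) ∗ Γ(q, b) = Γ(p + q, b)` (`gammaMeasure_conv`), gamma laws are
increasing in the shape, so the ARA1 law may be replaced by
`Γ((1 - ρ₁) A(nT), b) ∗ Γ(A(t) - A(nT), b)`. It then shares its second factor with the ARD1 law, and
`lintegral_gammaMeasure_shape_le` compares the first factors: with `c = 1 - ρ₁`, `a = A(nT)`,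
and independent `Y ∼ Γ(c a, b)`, `Z ∼ Γ((1 - c) a, b)`, one has `E[Y | Y + Z] = c (Y + Z)`, while
`c (Y + Z) ∼ Γ(a, b / c)`, so Jensen's inequality applies.

The order itself is used through `∫_0^x μ((-∞, u]) du = E[(x - X)⁺]` for `X ∼ μ` on `[0, ∞)`
(`setLIntegral_measure_Iic`); all expectations are lower Lebesgue integrals.
-/

open ProbabilityTheory Set MeasureTheory

open scoped ENNReal

lemma lintegral_eq_mul_lintegral_comp_mul {c : ℝ} (hc : 0 < c) {f : ℝ → ℝ≥0∞}
    (hf : Measurable f) : ∫⁻ y, f y = ENNReal.ofReal c * ∫⁻ u, f (c * u) := by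
  conv_lhs => rw [← Real.smul_map_volume_mul_left hc.ne', lintegral_smul_measure,
    lintegral_map hf (by fun_prop), abs_of_pos hc]
  rfl

lemma measurable_gammaPDF' (a r : ℝ) : Measurable (gammaPDF a r) :=
  (measurable_gammaPDFReal a r).ennreal_ofReal

/-- If `S` is gamma distributed with shape `p + q` and `U` is an independent `Beta(p, q)` variable,
then `(S * U, S * (1 - U))` is a pair of independent gamma variables; this is the corresponding
factorization of densities. -/
lemma gammaPDF_mul_gammaPDF {p q b x u : ℝ} (hp : 0 < p) (hq : 0 < q) (hb : 0 < b) (hx : 0 < x)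
    (hu0 : u ≠ 0) (hu1 : u ≠ 1) :
    ENNReal.ofReal x * (gammaPDF p b (x * u) * gammaPDF q b (x - x * u)) =
      gammaPDF (p + q) b x * betaPDF p q u := by
  have hxu : x - x * u = x * (1 - u) := by ring
  rcases lt_or_gt_of_ne hu0 with h | h
  · rw [gammaPDF_of_neg (mul_neg_of_pos_of_neg hx h), betaPDF_eq_zero_of_nonpos h.le]
    simp
  rcases lt_or_gt_of_ne hu1 with h1 | h1
  · have h1' : 0 < 1 - u := by linarith
    rw [hxu, gammaPDF_of_nonneg (by positivity), gammaPDF_of_nonneg (by positivity),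
      gammaPDF_of_nonneg hx.le, betaPDF_of_pos_lt_one h h1,
      ← ENNReal.ofReal_mul (by positivity), ← ENNReal.ofReal_mul (by positivity),
      ← ENNReal.ofReal_mul (by positivity)]
    congr 1
    have e1 : Real.exp (-(b * x)) = Real.exp (-(b * (x * u))) * Real.exp (-(b * (x * (1 - u)))) := by
      rw [← Real.exp_add]; ring_nf
    have e2 : x ^ (p + q - 1) = x * (x ^ (p - 1) * x ^ (q - 1)) := by
      rw [← Real.rpow_add hx]
      nth_rewrite 2 [← Real.rpow_one x]
      rw [← Real.rpow_add hx]; ring_nf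
    have g1 := (Real.Gamma_pos_of_pos hp).ne'
    have g2 := (Real.Gamma_pos_of_pos hq).ne'
    have g3 := (Real.Gamma_pos_of_pos (add_pos hp hq)).ne'
    rw [Real.mul_rpow hx.le h.le, Real.mul_rpow hx.le h1'.le, e1, e2, Real.rpow_add hb, beta]
    field_simp
  · rw [hxu, gammaPDF_of_neg (x := x * (1 - u)) (mul_neg_of_pos_of_neg hx (by linarith)),
      betaPDF_eq_zero_of_one_le h1.le]
    simp

lemma lconvolution_gammaPDF {p q b x : ℝ} (hp : 0 < p) (hq : 0 < q) (hb : 0 < b) (hx : x ≠ 0) :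
    ∫⁻ y, gammaPDF p b y * gammaPDF q b (-y + x) = gammaPDF (p + q) b x := by
  rcases lt_or_gt_of_ne hx with h | h
  · rw [gammaPDF_of_neg h]
    refine (lintegral_congr fun y => ?_).trans lintegral_zero
    rcases lt_or_ge y 0 with hy | hy
    · rw [gammaPDF_of_neg hy, zero_mul]
    · rw [gammaPDF_of_neg (x := -y + x) (by linarith), mul_zero]
  · have := measurable_gammaPDF' p b
    have := measurable_gammaPDF' q b
    rw [lintegral_eq_mul_lintegral_comp_mul h (by fun_prop), ← lintegral_const_mul _ (by fun_prop)]
    calc _ = ∫⁻ u, gammaPDF (p + q) b x * betaPDF p q u := by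
          refine lintegral_congr_ae ?_
          filter_upwards [Measure.ae_ne volume (0:ℝ), Measure.ae_ne volume (1:ℝ)] with u h0 h1
          rw [← gammaPDF_mul_gammaPDF hp hq hb h h0 h1]
          ring_nf
      _ = _ := by
          rw [lintegral_const_mul' _ _ (by simp [gammaPDF]), lintegral_betaPDF_eq_one hp hq, mul_one]

lemma gammaMeasure_conv {p q b : ℝ} (hp : 0 < p) (hq : 0 < q) (hb : 0 < b) :
    (gammaMeasure p b).conv (gammaMeasure q b) = gammaMeasure (p + q) b := by
  unfold gammaMeasure
  rw [conv_withDensity_eq_lconvolution (measurable_gammaPDF' _ _) (measurable_gammaPDF' _ _)]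
  refine withDensity_congr_ae ?_
  filter_upwards [Measure.ae_ne volume (0:ℝ)] with x hx
  exact lconvolution_gammaPDF hp hq hb hx

lemma gammaMeasure_div_rate {a b c : ℝ} (hb : 0 < b) (hc : 0 < c) :
    gammaMeasure a (b / c) = (gammaMeasure a b).map (c * ·) := by
  have m1 := measurable_gammaPDF' a (b / c)
  have m2 := measurable_gammaPDF' a b
  refine Measure.ext_of_lintegral _ fun f hf => ?_
  rw [lintegral_map hf (by fun_prop), gammaMeasure, gammaMeasure,
    lintegral_withDensity_eq_lintegral_mul _ m1 hf,
    lintegral_withDensity_eq_lintegral_mul _ m2 (by fun_prop),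
    lintegral_eq_mul_lintegral_comp_mul hc (by fun_prop), ← lintegral_const_mul _ (by fun_prop)]
  refine lintegral_congr_ae ?_
  filter_upwards [Measure.ae_ne volume (0:ℝ)] with y hy
  simp only [Pi.mul_apply, ← mul_assoc]
  congr 1
  rcases lt_or_gt_of_ne hy with h | h
  · rw [gammaPDF_of_neg h, gammaPDF_of_neg (mul_neg_of_pos_of_neg hc h), mul_zero]
  · rw [gammaPDF_of_nonneg h.le, gammaPDF_of_nonneg (by positivity),
      ← ENNReal.ofReal_mul hc.le, Real.mul_rpow hc.le h.le, Real.div_rpow hb.le hc.le]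
    have e : b / c * (c * y) = b * y := by field_simp
    have e2 : c ^ a = c * c ^ (a - 1) := by
      rw [Real.rpow_sub_one hc.ne']; field_simp
    have := Real.rpow_pos_of_pos hc (a - 1)
    rw [e, e2]
    congr 1
    field_simp

/-- Size-biasing a gamma law raises its shape parameter by one. -/
lemma lintegral_ofReal_mul_gammaMeasure {a b : ℝ} (ha : 0 < a) (hb : 0 < b) {g : ℝ → ℝ≥0∞}
    (hg : Measurable g) :
    ∫⁻ y, ENNReal.ofReal y * g y ∂(gammaMeasure a b) =
      ENNReal.ofReal (a / b) * ∫⁻ y, g y ∂(gammaMeasure (a + 1) b) := by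
  have m1 := measurable_gammaPDF' a b
  have m2 := measurable_gammaPDF' (a + 1) b
  rw [gammaMeasure, gammaMeasure, lintegral_withDensity_eq_lintegral_mul _ m1 (by fun_prop),
    lintegral_withDensity_eq_lintegral_mul _ m2 hg, ← lintegral_const_mul _ (by fun_prop)]
  refine lintegral_congr_ae ?_
  filter_upwards [Measure.ae_ne volume (0:ℝ)] with y hy
  simp only [Pi.mul_apply, ← mul_assoc]
  congr 1
  rcases lt_or_gt_of_ne hy with h | h
  · rw [gammaPDF_of_neg h, gammaPDF_of_neg h, mul_zero, zero_mul]
  · have := Real.Gamma_pos_of_pos ha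
    rw [gammaPDF_of_nonneg h.le, gammaPDF_of_nonneg h.le, ← ENNReal.ofReal_mul (by positivity),
      ← ENNReal.ofReal_mul (by positivity), Real.Gamma_add_one ha.ne', Real.rpow_add hb,
      Real.rpow_one, add_sub_cancel_right, Real.rpow_sub_one h.ne']
    congr 1
    field_simp

lemma ae_nonneg_gammaMeasure (a b : ℝ) : ∀ᵐ y ∂(gammaMeasure a b), 0 ≤ y := by
  have : gammaMeasure a b (Iio 0) = 0 := by
    rw [gammaMeasure, withDensity_apply _ measurableSet_Iio, lintegral_gammaPDF_of_nonpos le_rfl]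
  rw [ae_iff]
  simp only [not_le]
  exact this

lemma ae_nonneg_conv {μ ν : Measure ℝ} [SFinite μ] [SFinite ν] (hμ : ∀ᵐ y ∂μ, 0 ≤ y)
    (hν : ∀ᵐ y ∂ν, 0 ≤ y) : ∀ᵐ y ∂(μ.conv ν), 0 ≤ y := by
  rw [Measure.conv, ae_map_iff (by fun_prop) measurableSet_Ici]
  filter_upwards [Measure.quasiMeasurePreserving_fst.ae hμ,
    Measure.quasiMeasurePreserving_snd.ae hν] with z h1 h2
  exact add_nonneg h1 h2

/-- For a law on `[0, ∞)`, the integrated distribution function at `x` is the expectation of the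
positive part `(x - y)⁺`; `ENNReal.ofReal` supplies the positive part. -/
lemma setLIntegral_measure_Iic {μ : Measure ℝ} [SFinite μ] (hμ : ∀ᵐ y ∂μ, 0 ≤ y) (x : ℝ) :
    ∫⁻ u in Ioc 0 x, μ (Iic u) = ∫⁻ y, ENNReal.ofReal (x - y) ∂μ := by
  have hS : MeasurableSet {z : ℝ × ℝ | z.2 ≤ z.1} := measurableSet_le measurable_snd measurable_fst
  have h1 : ∀ u : ℝ, μ (Iic u) = ∫⁻ y, {z : ℝ × ℝ | z.2 ≤ z.1}.indicator 1 (u, y) ∂μ := by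
    intro u
    rw [← lintegral_indicator_one measurableSet_Iic]
    rfl
  rw [restrict_Ioc_eq_restrict_Icc]
  simp_rw [h1]
  rw [lintegral_lintegral_swap
    (f := fun u y => {z : ℝ × ℝ | z.2 ≤ z.1}.indicator (1 : ℝ × ℝ → ℝ≥0∞) (u, y))
    (measurable_one.indicator hS).aemeasurable]
  refine lintegral_congr_ae ?_
  filter_upwards [hμ] with y hy
  have : ∀ u : ℝ, {z : ℝ × ℝ | z.2 ≤ z.1}.indicator (1 : ℝ × ℝ → ℝ≥0∞) (u, y) =
      (Ici y).indicator 1 u := fun u => rfl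
  simp_rw [this]
  rw [lintegral_indicator_one measurableSet_Ici, Measure.restrict_apply measurableSet_Ici,
    inter_comm]
  have hset : Icc 0 x ∩ Ici y = Icc y x := by
    ext u
    simp only [mem_inter_iff, mem_Icc, mem_Ici]
    exact ⟨fun h => ⟨h.2, h.1.2⟩, fun h => ⟨⟨hy.trans h.1, h.2⟩, h.1⟩⟩
  rw [hset, Real.volume_Icc]

lemma integral_cdf_le {μ ν : Measure ℝ} [IsProbabilityMeasure μ] [IsProbabilityMeasure ν]
    (hμ : ∀ᵐ y ∂μ, 0 ≤ y) (hν : ∀ᵐ y ∂ν, 0 ≤ y) {x : ℝ} (hx : 0 ≤ x)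
    (h : ∫⁻ y, ENNReal.ofReal (x - y) ∂μ ≤ ∫⁻ y, ENNReal.ofReal (x - y) ∂ν) :
    ∫ u in (0:ℝ)..x, (μ (Iic u)).toReal ≤ ∫ u in (0:ℝ)..x, (ν (Iic u)).toReal := by
  have hm : ∀ κ : Measure ℝ, Measurable fun u => κ (Iic u) := fun κ =>
    Monotone.measurable fun u v huv => measure_mono (Iic_subset_Iic.2 huv)
  rw [intervalIntegral.integral_of_le hx, intervalIntegral.integral_of_le hx,
    integral_toReal (hm μ).aemeasurable (ae_of_all _ fun u => measure_lt_top _ _),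
    integral_toReal (hm ν).aemeasurable (ae_of_all _ fun u => measure_lt_top _ _),
    setLIntegral_measure_Iic hμ, setLIntegral_measure_Iic hν]
  refine ENNReal.toReal_mono (ne_top_of_le_ne_top (b := ENNReal.ofReal x) ENNReal.ofReal_ne_top ?_) h
  calc ∫⁻ y, ENNReal.ofReal (x - y) ∂ν ≤ ∫⁻ _, ENNReal.ofReal x ∂ν := by
        refine lintegral_mono_ae ?_
        filter_upwards [hν] with y hy
        exact ENNReal.ofReal_le_ofReal (by linarith)
    _ = _ := by simp

/-- Trading shape for scale: `Γ(c a, b)` lies below the law of `c S`, `S ∼ Γ(a, b)`, in the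
increasing concave order. Writing `S = Y + Z` with independent gamma parts of shapes `c a` and
`(1 - c) a`, size-biasing gives `E[Y | S] = c S`, and the claim is Jensen's inequality, here
through the tangent line of `y ↦ (x - y)⁺` at `c S`. -/
lemma lintegral_gammaMeasure_shape_le {a b c : ℝ} (ha : 0 < a) (hb : 0 < b) (hc : 0 < c)
    (hc1 : c < 1) (x : ℝ) :
    ∫⁻ s, ENNReal.ofReal (x - c * s) ∂(gammaMeasure a b) ≤
      ∫⁻ y, ENNReal.ofReal (x - y) ∂(gammaMeasure (c * a) b) := by
  have hp : 0 < c * a := by positivity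
  have hq : 0 < (1 - c) * a := mul_pos (by linarith) ha
  have hpq : c * a + (1 - c) * a = a := by ring
  have := isProbabilityMeasure_gammaMeasure hp hb
  have := isProbabilityMeasure_gammaMeasure hq hb
  have := isProbabilityMeasure_gammaMeasure (a := a + 1) (by linarith) hb
  set ψ : ℝ → ℝ≥0∞ := {s | c * s < x}.indicator 1 with hψ
  have mψ : Measurable ψ :=
    measurable_one.indicator (measurableSet_lt (by fun_prop) measurable_const)
  have hψ1 : ∀ s, ψ s ≤ 1 := fun s => indicator_le_self' (by simp) s
  have hconv : ∀ f : ℝ → ℝ≥0∞, Measurable f → ∫⁻ s, f s ∂(gammaMeasure a b) =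
      ∫⁻ y, ∫⁻ z, f (y + z) ∂(gammaMeasure ((1 - c) * a) b) ∂(gammaMeasure (c * a) b) := by
    intro f hf
    rw [← Measure.lintegral_conv hf, gammaMeasure_conv hp hq hb, hpq]
  -- The two tangent-line corrections agree; this is `E[Y ψ(S)] = E[c S ψ(S)]`.
  have hI1 : ∫⁻ s, ENNReal.ofReal s * (ENNReal.ofReal c * ψ s) ∂(gammaMeasure a b) =
      ENNReal.ofReal (c * a / b) * ∫⁻ s, ψ s ∂(gammaMeasure (a + 1) b) := by
    rw [lintegral_ofReal_mul_gammaMeasure ha hb (by fun_prop), lintegral_const_mul _ mψ,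
      ← mul_assoc, ← ENNReal.ofReal_mul (by positivity)]
    congr 2
    ring
  have hI2 : ∫⁻ y, ∫⁻ z, ENNReal.ofReal y * ψ (y + z) ∂(gammaMeasure ((1 - c) * a) b)
        ∂(gammaMeasure (c * a) b) =
      ENNReal.ofReal (c * a / b) * ∫⁻ s, ψ s ∂(gammaMeasure (a + 1) b) := by
    have e : a + 1 = (c * a + 1) + (1 - c) * a := by ring
    rw [e, ← gammaMeasure_conv (by positivity) hq hb, Measure.lintegral_conv mψ,
      ← lintegral_ofReal_mul_gammaMeasure hp hb (by fun_prop)]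
    refine lintegral_congr fun y => ?_
    rw [lintegral_const_mul _ (by fun_prop)]
  have hfin : ENNReal.ofReal (c * a / b) * ∫⁻ s, ψ s ∂(gammaMeasure (a + 1) b) ≠ ∞ := by
    refine ENNReal.mul_ne_top ENNReal.ofReal_ne_top (ne_top_of_le_ne_top ENNReal.one_ne_top ?_)
    calc _ ≤ ∫⁻ _, 1 ∂(gammaMeasure (a + 1) b) := lintegral_mono hψ1
      _ = 1 := by simp
  refine (ENNReal.add_le_add_iff_right hfin).1 ?_
  calc _ = ∫⁻ s, (ENNReal.ofReal (x - c * s) + ENNReal.ofReal s * (ENNReal.ofReal c * ψ s))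
          ∂(gammaMeasure a b) := by
        rw [lintegral_add_left (by fun_prop), hI1]
    _ = ∫⁻ y, ∫⁻ z, (ENNReal.ofReal (x - c * (y + z)) +
          ENNReal.ofReal (y + z) * (ENNReal.ofReal c * ψ (y + z)))
          ∂(gammaMeasure ((1 - c) * a) b) ∂(gammaMeasure (c * a) b) := hconv _ (by fun_prop)
    _ ≤ ∫⁻ y, ∫⁻ z, (ENNReal.ofReal (x - y) + ENNReal.ofReal y * ψ (y + z))
          ∂(gammaMeasure ((1 - c) * a) b) ∂(gammaMeasure (c * a) b) := by
        refine lintegral_mono_ae ?_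
        filter_upwards [ae_nonneg_gammaMeasure (c * a) b] with y hy
        refine lintegral_mono_ae ?_
        filter_upwards [ae_nonneg_gammaMeasure ((1 - c) * a) b] with z hz
        by_cases h : c * (y + z) < x
        · have : ψ (y + z) = 1 := indicator_of_mem (s := {s | c * s < x}) h _
          rw [this, mul_one, mul_one, ← ENNReal.ofReal_mul (by positivity),
            ← ENNReal.ofReal_add (by linarith) (by positivity)]
          refine le_trans (ENNReal.ofReal_le_ofReal ?_) ENNReal.ofReal_add_le
          linarith
        · have : ψ (y + z) = 0 := indicator_of_notMem (s := {s | c * s < x}) h _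
          rw [this, ENNReal.ofReal_of_nonpos (p := x - c * (y + z)) (by linarith)]
          simp
    _ = _ := by
        rw [← hI2, ← lintegral_add_left (by fun_prop)]
        refine lintegral_congr fun y => ?_
        rw [lintegral_add_left (by fun_prop), lintegral_const, measure_univ, mul_one]

lemma lintegral_gammaMeasure_anti {a a' b : ℝ} (ha : 0 < a) (haa : a ≤ a') (hb : 0 < b) (x : ℝ) :
    ∫⁻ y, ENNReal.ofReal (x - y) ∂(gammaMeasure a' b) ≤
      ∫⁻ y, ENNReal.ofReal (x - y) ∂(gammaMeasure a b) := by
  rcases haa.eq_or_lt with rfl | h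
  · rfl
  have hd : 0 < a' - a := by linarith
  have := isProbabilityMeasure_gammaMeasure hd hb
  have e : a' = a + (a' - a) := by ring
  rw [e, ← gammaMeasure_conv ha hd hb, Measure.lintegral_conv (by fun_prop)]
  refine lintegral_mono fun y => ?_
  calc _ ≤ ∫⁻ _, ENNReal.ofReal (x - y) ∂(gammaMeasure (a' - a) b) := by
        refine lintegral_mono_ae ?_
        filter_upwards [ae_nonneg_gammaMeasure (a' - a) b] with z hz
        exact ENNReal.ofReal_le_ofReal (by linarith)
    _ = _ := by simp

/-- Increments of a convex function over intervals of fixed length are nondecreasing. -/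
lemma ConvexOn.add_le_add_shift {A : ℝ → ℝ} {S : Set ℝ} (hA : ConvexOn ℝ S A) {u v h : ℝ}
    (hu : u ∈ S) (hvh : v + h ∈ S) (huv : u ≤ v) (hh : 0 < h) :
    A (u + h) + A v ≤ A u + A (v + h) := by
  -- Both inner points are convex combinations of the end points, with weights exchanged.
  have hL : 0 < v - u + h := by linarith
  have hw1 : 0 ≤ h / (v - u + h) := by positivity
  have hw2 : 0 ≤ (v - u) / (v - u + h) := div_nonneg (by linarith) hL.le
  have h1 := hA.2 hu hvh hw2 hw1 (by field_simp)
  have h2 := hA.2 hu hvh hw1 hw2 (by field_simp; ring)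
  simp only [smul_eq_mul] at h1 h2
  have e1 : (v - u) / (v - u + h) * u + h / (v - u + h) * (v + h) = u + h := by
    field_simp; ring
  have e2 : h / (v - u + h) * u + (v - u) / (v - u + h) * (v + h) = v := by
    field_simp; ring
  have e3 : (v - u) / (v - u + h) = 1 - h / (v - u + h) := by field_simp; ring
  rw [e1] at h1
  rw [e2] at h2
  rw [e3] at h1 h2
  linarith

/-- Theorem, convex case: If `A` is convex with
`A((1−ρ₂)s) ≤ (1−ρ₁)A(s)` for all `s > 0`, then the ARA1 deterioration law
`μ_Z = Γ(A(t−ρ₂nT), b)` is smaller in the increasing concave order than the ARD1 law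
`μ_Y = Γ(A(nT), b/(1−ρ₁)) ∗ Γ(A(t)−A(nT), b)`. -/
theorem ARA1_icv_ARD1_convex
    (A : ℝ → ℝ) (hAcont : ContinuousOn A (Ici 0)) (hAmono : MonotoneOn A (Ici 0))
    (hAconv : ConvexOn ℝ (Ici 0) A)
    (hAnonneg : ∀ s, 0 ≤ s → 0 ≤ A s) (hA0 : A 0 = 0)
    (ρ₁ ρ₂ : ℝ) (hρ₁ : ρ₁ ∈ Ioo (0:ℝ) 1) (hρ₂ : ρ₂ ∈ Ioo (0:ℝ) 1)
    (hshape : ∀ s : ℝ, 0 < s → A ((1 - ρ₂) * s) ≤ (1 - ρ₁) * A s)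
    (b T : ℝ) (hb : 0 < b) (hT : 0 < T) (n : ℕ) (t : ℝ)
    (ht₁ : (n : ℝ) * T ≤ t) (ht₂ : t < ((n : ℝ) + 1) * T)
    (hAnT : 0 < A ((n : ℝ) * T)) (hAt : A ((n : ℝ) * T) < A t)
    (hAZ : 0 < A (t - ρ₂ * ((n : ℝ) * T)))
    (μY μZ : Measure ℝ)
    (hμY : μY = (gammaMeasure (A ((n : ℝ) * T)) (b / (1 - ρ₁))).conv
      (gammaMeasure (A t - A ((n : ℝ) * T)) b))
    (hμZ : μZ = gammaMeasure (A (t - ρ₂ * ((n : ℝ) * T))) b) :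
    ∀ x : ℝ, 0 ≤ x →
      ∫ u in (0:ℝ)..x, (μY (Iic u)).toReal ≤ ∫ u in (0:ℝ)..x, (μZ (Iic u)).toReal := by
  intro x hx
  obtain ⟨hρ₁0, hρ₁1⟩ := hρ₁
  obtain ⟨hρ₂0, hρ₂1⟩ := hρ₂
  set s : ℝ := (n : ℝ) * T with hs
  have hs0 : 0 < s := by
    refine lt_of_le_of_ne (by positivity) fun h => ?_
    rw [← h, hA0] at hAnT
    exact lt_irrefl _ hAnT
  have hc : 0 < 1 - ρ₁ := by linarith
  have hd : 0 < A t - A s := by linarith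
  have hρs : 0 < ρ₂ * s := by positivity
  have hρs1 : ρ₂ * s < s := by nlinarith
  have hshapeZ : A (t - ρ₂ * s) ≤ (1 - ρ₁) * A s + (A t - A s) := by
    have h1 := hAconv.add_le_add_shift (u := (1 - ρ₂) * s) (v := t - ρ₂ * s) (h := ρ₂ * s)
      (mem_Ici.2 (by nlinarith)) (mem_Ici.2 (by linarith)) (by linarith) hρs
    have e1 : (1 - ρ₂) * s + ρ₂ * s = s := by ring
    have e2 : t - ρ₂ * s + ρ₂ * s = t := by ring
    rw [e1, e2] at h1
    have := hshape s hs0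
    linarith
  have := isProbabilityMeasure_gammaMeasure hAnT (div_pos hb hc)
  have := isProbabilityMeasure_gammaMeasure hAnT hb
  have := isProbabilityMeasure_gammaMeasure hd hb
  have := isProbabilityMeasure_gammaMeasure hAZ hb
  have := isProbabilityMeasure_gammaMeasure (mul_pos hc hAnT) hb
  subst hμY hμZ
  refine integral_cdf_le (ae_nonneg_conv (ae_nonneg_gammaMeasure _ _) (ae_nonneg_gammaMeasure _ _))
    (ae_nonneg_gammaMeasure _ _) hx ?_
  refine le_trans ?_ (lintegral_gammaMeasure_anti hAZ hshapeZ hb x)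
  rw [← gammaMeasure_conv (mul_pos hc hAnT) hd hb, Measure.conv_comm,
    Measure.conv_comm (gammaMeasure ((1 - ρ₁) * A s) b), Measure.lintegral_conv (by fun_prop),
    Measure.lintegral_conv (by fun_prop)]
  -- Conditionally on the common increment `w`, compare at the shifted level `x - w`.
  refine lintegral_mono fun w => ?_
  rw [gammaMeasure_div_rate hb hc, lintegral_map (by fun_prop) (by fun_prop)]
  simpa only [sub_sub] using lintegral_gammaMeasure_shape_le hAnT hb hc (by linarith) (x - w)
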